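/- Let n ≥ 1 and let Q be a nondegenerate quadratic form on ℝⁿ of signature (p, q) with p ≥ 1 and p + q = n, with polar bilinear form B. Let w ∈ ℝⁿ satisfy Q(w) > 0. Then the set K_w = {v ∈ ℝⁿ : Q(v) > 0 and B(v, w) > 0}, equipped with the subspace topology, is an open, nonempty and contractible subset of ℝⁿ. -/

import Mathlib

/-!
For `a, b > 0`, the expansion `Q (a w + b v) = a² Q w + b² Q v + 2 a b B(w, v)` is a sum of positive
terms when `v` lies in the chamber of a positive vector `w`. The chamber is therefore star-shaped
about `w`, and contracts onto `w` along segments.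
-/

open QuadraticMap

theorem continuous_polar {M N : Type*} [AddCommGroup M] [TopologicalSpace M] [ContinuousAdd M]
    [AddCommGroup N] [TopologicalSpace N] [ContinuousSub N] {f : M → N} (hf : Continuous f) :
    Continuous fun p : M × M ↦ polar f p.1 p.2 := by
  unfold polar
  fun_prop

theorem quadraticMap_continuous_of_finiteDimensional {𝕜 E F : Type*}
    [NontriviallyNormedField 𝕜] [CompleteSpace 𝕜]
    [AddCommGroup E] [Module 𝕜 E] [TopologicalSpace E] [IsTopologicalAddGroup E]
    [ContinuousSMul 𝕜 E] [T2Space E] [FiniteDimensional 𝕜 E]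
    [AddCommGroup F] [Module 𝕜 F] [TopologicalSpace F] [IsTopologicalAddGroup F]
    [ContinuousSMul 𝕜 F] (Q : QuadraticMap 𝕜 E F) : Continuous Q := by
  obtain ⟨B, rfl⟩ := LinearMap.BilinMap.toQuadraticMap_surjective Q
  let b := Module.finBasis 𝕜 E
  have apply_eq_sum (v : E) : B.toQuadraticMap v = ∑ i, b.coord i v • B (b i) v :=
    calc B v v = B (∑ i, b.coord i v • b i) v := by simp only [b.coord_apply, b.sum_repr]
      _ = ∑ i, b.coord i v • B (b i) v := by
        simp only [map_sum, map_smul, LinearMap.sum_apply, LinearMap.smul_apply]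
  rw [funext apply_eq_sum]
  exact continuous_finsetSum _ fun i _ ↦
    (b.coord i).continuous_of_finiteDimensional.smul (B (b i)).continuous_of_finiteDimensional

theorem quadraticMap_map_smul_add_smul {R M N : Type*} [CommRing R] [AddCommGroup M] [Module R M]
    [AddCommGroup N] [Module R N] (Q : QuadraticMap R M N) (a b : R) (x y : M) :
    Q (a • x + b • y) = (a * a) • Q x + (b * b) • Q y + (a * b) • polar Q x y := by
  rw [QuadraticMap.map_add Q, QuadraticMap.map_smul, QuadraticMap.map_smul, polar_smul_left,
    polar_smul_right, smul_smul]

section Chamber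

variable {𝕜 E : Type*} [Field 𝕜] [LinearOrder 𝕜] [AddCommGroup E] [Module 𝕜 E]

/-- The chamber `K_w = {v | Q(v) > 0 and B(v, w) > 0}` of the positive cone of a quadratic form `Q`
determined by a vector `w`. Mathlib's `polar Q v w` is `Q (v + w) - Q v - Q w`, so the polar
bilinear form `B(v, w)` is half of it. -/
def positiveConeChamber (Q : QuadraticForm 𝕜 E) (w : E) : Set E :=
  {v | 0 < Q v ∧ 0 < polar Q v w / 2}

variable [IsStrictOrderedRing 𝕜] {Q : QuadraticForm 𝕜 E} {v w : E}

theorem mem_positiveConeChamber_iff : v ∈ positiveConeChamber Q w ↔ 0 < Q v ∧ 0 < polar Q v w :=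
  and_congr_right' (div_pos_iff_of_pos_right two_pos)

theorem self_mem_positiveConeChamber (hw : 0 < Q w) : w ∈ positiveConeChamber Q w := by
  simpa [mem_positiveConeChamber_iff, polar_self] using hw

theorem smul_add_smul_mem_positiveConeChamber (hw : 0 < Q w) (hv : v ∈ positiveConeChamber Q w)
    {a b : 𝕜} (ha : 0 < a) (hb : 0 < b) : a • w + b • v ∈ positiveConeChamber Q w := by
  rw [mem_positiveConeChamber_iff] at hv ⊢
  obtain ⟨hv, hvw⟩ := hv
  constructor
  · rw [quadraticMap_map_smul_add_smul, polar_comm Q w v]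
    simp only [smul_eq_mul]
    positivity
  · rw [polar_add_left, polar_smul_left, polar_smul_left, polar_self]
    simp only [smul_eq_mul, nsmul_eq_mul]
    positivity

theorem starConvex_positiveConeChamber (hw : 0 < Q w) :
    StarConvex 𝕜 w (positiveConeChamber Q w) :=
  (starConvex_iff_forall_pos (self_mem_positiveConeChamber hw)).2 fun _ hv _ _ ha hb _ ↦
    smul_add_smul_mem_positiveConeChamber hw hv ha hb

theorem isOpen_positiveConeChamber [TopologicalSpace 𝕜] [OrderClosedTopology 𝕜] [ContinuousSub 𝕜]
    [TopologicalSpace E] [ContinuousAdd E] (hQ : Continuous Q) (w : E) :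
    IsOpen (positiveConeChamber Q w) := by
  have hpolar : Continuous fun v ↦ polar Q v w :=
    (continuous_polar hQ).comp (Continuous.prodMk_left w)
  have chamber_eq : positiveConeChamber Q w = {v | 0 < Q v ∧ 0 < polar Q v w} :=
    Set.ext fun _ ↦ mem_positiveConeChamber_iff
  rw [chamber_eq]
  exact (isOpen_lt continuous_const hQ).and (isOpen_lt continuous_const hpolar)

end Chamber

theorem positive_cone_chamber_contractible_general {E : Type*} [AddCommGroup E] [Module ℝ E]
    [TopologicalSpace E] [ContinuousAdd E] [ContinuousSMul ℝ E] {Q : QuadraticForm ℝ E}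
    (hQ : Continuous Q) {w : E} (hw : 0 < Q w) :
    IsOpen (positiveConeChamber Q w) ∧ (positiveConeChamber Q w).Nonempty ∧
      ContractibleSpace (positiveConeChamber Q w) := by
  have hne : (positiveConeChamber Q w).Nonempty := ⟨w, self_mem_positiveConeChamber hw⟩
  exact ⟨isOpen_positiveConeChamber hQ w, hne,
    (starConvex_positiveConeChamber hw).contractibleSpace hne⟩

/-- for a nondegenerate quadratic form `Q` of signature `(p,q)` on `ℝⁿ`
(`p ≥ 1`, `p + q = n`) and `w` with `Q(w) > 0`, the chamber
`K_w = {v : Q(v) > 0 and B(v,w) > 0}` (where `B` is the polar form of `Q` divided by 2)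
is an open, nonempty and contractible subset of `ℝⁿ`. -/
theorem positive_cone_chamber_contractible
    (n p q : ℕ) (hn : 1 ≤ n) (hp : 1 ≤ p) (hpq : p + q = n)
    (Q : QuadraticForm ℝ (Fin n → ℝ))
    (hnondeg : ∀ v : Fin n → ℝ, (∀ u : Fin n → ℝ, QuadraticMap.polar ⇑Q v u = 0) → v = 0)
    (P N : Submodule ℝ (Fin n → ℝ)) (hcompl : IsCompl P N)
    (hdimP : Module.finrank ℝ P = p) (hdimN : Module.finrank ℝ N = q)
    (horth : ∀ v ∈ P, ∀ u ∈ N, QuadraticMap.polar ⇑Q v u = 0)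
    (hpos : ∀ v ∈ P, v ≠ 0 → 0 < Q v)
    (hneg : ∀ u ∈ N, u ≠ 0 → Q u < 0)
    (w : Fin n → ℝ) (hw : 0 < Q w) :
    IsOpen {v : Fin n → ℝ | 0 < Q v ∧ 0 < QuadraticMap.polar ⇑Q v w / 2} ∧
    {v : Fin n → ℝ | 0 < Q v ∧ 0 < QuadraticMap.polar ⇑Q v w / 2}.Nonempty ∧
    ContractibleSpace {v : Fin n → ℝ | 0 < Q v ∧ 0 < QuadraticMap.polar ⇑Q v w / 2} :=
  positive_cone_chamber_contractible_general (quadraticMap_continuous_of_finiteDimensional Q) hw
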